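/- Let q be a prime power, k ≥ 2, z ≥ 1, let p₁ > p₂ > ⋯ > p_z be distinct odd primes, e₁,…,e_z ≥ 1, and n = p_z^{e_z}⋯p_1^{e_1}·k. Set ℓ_j = (p_j−3)/2 and P_j = ∏_{h=1}^{j−1} p_h^{e_h} (so P₁ = 1). Consider the tower of subfields of F_{q^n} starting at F_{q^k} in which the degree is multiplied successively by p₁ (e₁ times), then by p₂ (e₂ times), …, then by p_z (e_z times). For each step of the tower from a field K to the next field L, with [L:K] = p_j, fix a primitive element ω of K and an element γ ∈ L with K(γ) = L, and consider the injective F_q-linear maps Φ: K → L of the form u ↦ u·(1 + α₁γ + ⋯ + α_{ℓ₀}γ^{ℓ₀}) + ω^{j′}·(u^q + a·u)·γ^{ℓ₁+1}, where 0 ≤ ℓ₀ ≤ ℓ_j, α ∈ K^{ℓ₀} with α_{ℓ₀} ≠ 0 when ℓ₀ ≥ 1, a ∈ K, 0 ≤ j′ ≤ q−2, and ℓ₀ ≤ ℓ₁ ≤ ℓ_j. Let C ⊆ G_q(n,k) be the set of all subspaces obtained by applying to F_{q^k} the composition, along the tower, of one such map for each step, each scaled by an arbitrary unit of its codomain. Then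 C is a cyclic subspace code with minimum distance 2k − 2 and cardinality |C| = ∏_{j=1}^{z} ∏_{i=1}^{e_j} [ q^{p_j^{i−1}P_j k}·(q^{(ℓ_j+1)p_j^{i−1}P_j k}−1)·(q^{p_j^{i}P_j k}−1) / (q^{p_j^{i−1}P_j k}−1) ]. -/

import Mathlib

/-!
The admissible maps of one step `K ⊂ L` have the form `u ↦ P_u(γ)`, where
`P_u = u f + ω^j (u^q + a u) X^m` is a polynomial over `K` with `f(0) = 1` and
`deg f < m ≤ (p - 1)/2`.

Suppose two scaled images `β Φ(U)` and `β' Φ'(V)` share two `Fq`-independent vectors, given by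
`u₁, u₂ ∈ U` and `v₁, v₂ ∈ V`. Eliminating the scaling factors gives
`P_{u₁}(γ) P'_{v₂}(γ) = P_{u₂}(γ) P'_{v₁}(γ)`; both sides have degree at most `p - 1 < deg γ`, so
this is an identity of polynomials. Constant terms give `v_i = c u_i` for one `c ∈ K`. After
dividing out, comparison of coefficients (`pencil_rigidity`) forces the two maps to have the same
`f` and `m` and the same top coefficients at `u₁` and `u₂`; here independence enters through
`u₁^{q-1} ≠ u₂^{q-1}`. Hence `ω^j = ω^{j'} c^{q-1}`, and since `q - 1` divides the order of `ω`
and `j, j' ≤ q - 2`, it follows that `j = j'`, `c ∈ Fq`, and then `a = a'` and `β/β' = c`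
(`step_rigidity`, `image_rigidity`).

So `U` and `V` already share the independent vectors `u₁, u₂`, and by induction along the tower
distinct codewords meet in dimension at most one (`nextCode_meetsInLines`). The same rigidity
shows that each orbit has full length, which makes the distance `2k - 2` attained (`minDist_eq`),
and that a codeword determines its unit modulo `Fqˣ`, its parameters and its predecessor, which
gives the cardinality (`nextCode_ncard`).
-/

open Module Submodule Filter

noncomputable section

/-- For `α` in a field `F` and an `Fq`-subspace `V` of `F`,
the subspace `α·V = {α·v : v ∈ V}`. -/
def mulSub {Fq F : Type*} [Field Fq] [Field F] [Algebra Fq F]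
    (α : F) (V : Submodule Fq F) : Submodule Fq F :=
  V.map (LinearMap.mulLeft Fq α)

/-- The orbit `Orb(V) = {α·V : α ∈ Fˣ}` of a subspace `V` under the Singer cycle. -/
def orb {Fq F : Type*} [Field Fq] [Field F] [Algebra Fq F]
    (V : Submodule Fq F) : Set (Submodule Fq F) :=
  {W | ∃ α : Fˣ, W = mulSub (α : F) V}

/-- The subspace distance `d(U,W) = dim(U+W) - dim(U∩W)`. -/
def sdist {Fq F : Type*} [Field Fq] [Field F] [Algebra Fq F]
    (U W : Submodule Fq F) : ℕ :=
  finrank Fq ↥(U ⊔ W) - finrank Fq ↥(U ⊓ W)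

/-- The minimum distance of a subspace code `C`:
the minimum of `d(U,W)` over distinct `U, W ∈ C`. -/
def minDist {Fq F : Type*} [Field Fq] [Field F] [Algebra Fq F]
    (C : Set (Submodule Fq F)) : ℕ :=
  sInf {d : ℕ | ∃ U ∈ C, ∃ W ∈ C, U ≠ W ∧ d = sdist U W}

/-- `Orb(V)` has full-length, i.e. the stabilizer of `V` is `Fq^*`:
`β·V = V` with `β ≠ 0` forces `β ∈ Fq`. -/
def FullLengthOrbit {Fq F : Type*} [Field Fq] [Field F] [Algebra Fq F]
    (V : Submodule Fq F) : Prop :=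
  ∀ β : F, β ≠ 0 → mulSub β V = V → β ∈ Set.range (algebraMap Fq F)

open Polynomial

/-! ### Rigidity of admissible maps -/

/-- An element of an extension of the finite field `Fq` fixed by the `q`-Frobenius lies in `Fq`. -/
lemma mem_range_of_pow_card {Fq K : Type*} [Field Fq] [Fintype Fq] [Field K] [Algebra Fq K]
    (x : K) (hx : x ^ Fintype.card Fq = x) : ∃ c : Fq, algebraMap Fq K c = x := by
  classical
  have h0 : (X ^ Fintype.card Fq - X : Fq[X]) ≠ 0 :=
    FiniteField.X_pow_card_sub_X_ne_zero Fq Fintype.one_lt_card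
  have hsp : (X ^ Fintype.card Fq - X : Fq[X]).Splits := by
    rw [splits_iff_card_roots, FiniteField.roots_X_pow_card_sub_X,
      FiniteField.X_pow_card_sub_X_natDegree_eq Fq Fintype.one_lt_card]
    rfl
  exact hsp.mem_range_of_isRoot h0 (i := algebraMap Fq K) (x := x) (by simp [hx])

lemma aeval_eq_zero_of_natDegree_lt {K L : Type*} [Field K] [Field L] [Algebra K L]
    {γ : L} {P : K[X]} (hP : P.natDegree < (minpoly K γ).natDegree) (h : aeval γ P = 0) :
    P = 0 := by
  by_contra hne
  have := natDegree_le_of_dvd (minpoly.dvd K γ h) hne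
  omega

/-- The rigidity at the heart of the construction: if the pencils `f + A·X^m` and `g + B·X^n`,
with `f`, `g` of constant term `1` and degrees below `m`, `n`, satisfy a nontrivial
cross-multiplication identity, they agree. -/
lemma pencil_rigidity {K : Type*} [Field K] {f g : K[X]} {m n : ℕ}
    (hf0 : f.coeff 0 = 1) (hg0 : g.coeff 0 = 1) (hfm : f.natDegree < m) (hgn : g.natDegree < n)
    {A₁ A₂ B₁ B₂ : K} (hA : A₁ ≠ A₂) (hB : B₁ ≠ B₂)
    (h : (f + C A₁ * X ^ m) * (g + C B₂ * X ^ n) = (f + C A₂ * X ^ m) * (g + C B₁ * X ^ n)) :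
    m = n ∧ f = g ∧ A₁ = B₁ ∧ A₂ = B₂ := by
  have h' : C (A₁ - A₂) * g * X ^ m = C (B₁ - B₂) * f * X ^ n
      + C (A₂ * B₁ - A₁ * B₂) * X ^ (m + n) := by
    simp only [map_sub, map_mul]
    rw [pow_add]
    linear_combination h
  -- The lowest-order terms on the two sides have orders `m` and `n`.
  have hmn : m = n := by
    rcases lt_trichotomy m n with hlt | heq | hlt
    · have := congrArg (fun P => P.coeff m) h'
      simp only [coeff_add, coeff_mul_X_pow', coeff_C_mul] at this
      rw [if_pos le_rfl, if_neg (by omega), if_neg (by omega)] at this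
      simp [hg0, sub_eq_zero, hA] at this
    · exact heq
    · have := congrArg (fun P => P.coeff n) h'
      simp only [coeff_add, coeff_mul_X_pow', coeff_C_mul] at this
      rw [if_pos le_rfl, if_neg (by omega), if_neg (by omega)] at this
      simp [hf0, eq_comm, sub_eq_zero, hB] at this
  subst hmn
  have h2 : C (A₁ - A₂) * g = C (B₁ - B₂) * f + C (A₂ * B₁ - A₁ * B₂) * X ^ m := by
    have hX : (X ^ m : K[X]) ≠ 0 := pow_ne_zero _ X_ne_zero
    apply mul_right_cancel₀ hX
    rw [h', pow_add]; ring
  have hAB : A₁ - A₂ = B₁ - B₂ := by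
    have := congrArg (fun P => P.coeff 0) h2
    simp only [coeff_add, coeff_mul_X_pow', coeff_C_mul, hf0, hg0] at this
    rw [if_neg (by omega)] at this
    simpa using this
  have hdet : A₂ * B₁ - A₁ * B₂ = 0 := by
    have := congrArg (fun P => P.coeff m) h2
    simp only [coeff_add, coeff_mul_X_pow', coeff_C_mul, coeff_eq_zero_of_natDegree_lt hfm,
      coeff_eq_zero_of_natDegree_lt hgn] at this
    simpa using this.symm
  have hfg : f = g := by
    rw [hdet, hAB] at h2
    have hne : (C (B₁ - B₂) : K[X]) ≠ 0 := by simpa [sub_eq_zero] using hB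
    apply mul_left_cancel₀ hne
    simpa using h2.symm
  have hz : (A₁ - A₂) * (B₁ - A₁) = 0 := by linear_combination -hdet - A₁ * hAB
  have h1 : A₁ = B₁ := by
    rcases mul_eq_zero.1 hz with h | h
    · exact absurd (sub_eq_zero.1 h) hA
    · exact (sub_eq_zero.1 h).symm
  refine ⟨rfl, hfg, h1, ?_⟩
  rw [h1] at hAB
  linear_combination -hAB

/-- The polynomial in `γ` representing the value at `u` of an admissible map, with multiplier
polynomial `f`, top exponent `m = ℓ₁ + 1` and twist `ω^j (u^q + a u)`. -/
def stepPoly {K : Type*} [Field K] (q : ℕ) (ω : K) (f : K[X]) (m : ℕ) (a : K) (j : ℕ) (u : K) :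
    K[X] :=
  C u * f + C (ω ^ j * (u ^ q + a * u)) * X ^ m

lemma stepPoly_eq_mul {K : Type*} [Field K] {q : ℕ} (hq : 1 ≤ q) (ω : K) (f : K[X]) (m : ℕ)
    (a : K) (j : ℕ) (u : K) :
    stepPoly q ω f m a j u = C u * (f + C (ω ^ j * (u ^ (q - 1) + a)) * X ^ m) := by
  obtain ⟨r, rfl⟩ := Nat.exists_eq_add_of_le' hq
  simp only [stepPoly, Nat.add_sub_cancel, pow_succ, map_mul, map_add]
  ring

lemma stepPoly_natDegree_le {K : Type*} [Field K] (q : ℕ) (ω : K) (f : K[X]) (m : ℕ)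
    (a : K) (j : ℕ) (u : K) (hfm : f.natDegree < m) :
    (stepPoly q ω f m a j u).natDegree ≤ m := by
  unfold stepPoly
  refine (natDegree_add_le _ _).trans (max_le ?_ ?_)
  · exact (natDegree_C_mul_le _ _).trans hfm.le
  · exact natDegree_C_mul_X_pow_le _ _

lemma stepPoly_coeff_zero {K : Type*} [Field K] (q : ℕ) (ω : K) (f : K[X]) (m : ℕ)
    (a : K) (j : ℕ) (u : K) (hf0 : f.coeff 0 = 1) (hfm : f.natDegree < m) :
    (stepPoly q ω f m a j u).coeff 0 = u := by
  have : m ≠ 0 := by omega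
  unfold stepPoly
  rw [coeff_add, coeff_C_mul, hf0, coeff_C_mul_X_pow, if_neg (Ne.symm this)]
  simp

/-- Powers of a primitive element with exponents below `q - 1` are distinct modulo
`(q - 1)`-th powers. -/
lemma exponent_eq {Fq K : Type*} [Field Fq] [Fintype Fq] [Field K] [Finite K] [Algebra Fq K]
    {ω : K} (hω0 : ω ≠ 0) (hω : ∀ x : K, x ≠ 0 → ∃ j : ℕ, ω ^ j = x) {c : K} (hc : c ≠ 0)
    {i j : ℕ} (hi : i < Fintype.card Fq - 1) (hj : j < Fintype.card Fq - 1)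
    (h : ω ^ j = ω ^ i * c ^ (Fintype.card Fq - 1)) : j = i := by
  have := Fintype.ofFinite K
  obtain ⟨r, rfl⟩ := hω c hc
  rw [← pow_mul, ← pow_add] at h
  set w : Kˣ := Units.mk0 ω hω0
  have hw : orderOf w = Nat.card Kˣ := by
    apply orderOf_eq_card_of_forall_mem_zpowers
    intro x
    obtain ⟨j, hj⟩ := hω x x.ne_zero
    exact ⟨j, by ext; simpa [w] using hj⟩
  have hdvd : Fintype.card Fq - 1 ∣ orderOf w := by
    rw [hw, Nat.card_units, Nat.card_eq_fintype_card, Module.card_eq_pow_finrank (K := Fq) (V := K)]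
    simpa only [one_pow] using Nat.sub_dvd_pow_sub_pow (Fintype.card Fq) 1 (finrank Fq K)
  have h2 : w ^ j = w ^ (i + r * (Fintype.card Fq - 1)) := by
    ext; simpa [w] using h
  have h3 := (pow_eq_pow_iff_modEq.1 h2).of_dvd hdvd
  have h4 : j % (Fintype.card Fq - 1) = (i + r * (Fintype.card Fq - 1)) % (Fintype.card Fq - 1) :=
    h3
  rwa [Nat.add_mul_mod_self_right, Nat.mod_eq_of_lt hi, Nat.mod_eq_of_lt hj] at h4

/-- If the scaled image of one admissible map meets the image of another in two `Fq`-independent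
vectors, then the two maps coincide, and the scaling factor and the change of arguments are given
by one and the same element of `Fq`. -/
lemma step_rigidity {Fq K L : Type*} [Field Fq] [Fintype Fq] [Field K] [Finite K] [Field L]
    [Algebra Fq K] [Algebra K L] {γ : L} {ℓ : ℕ} (hℓ : 2 * (ℓ + 1) < (minpoly K γ).natDegree)
    {ω : K} (hω0 : ω ≠ 0) (hω : ∀ x : K, x ≠ 0 → ∃ j : ℕ, ω ^ j = x)
    {f g : K[X]} {m n i j : ℕ} {a b : K}
    (hf0 : f.coeff 0 = 1) (hg0 : g.coeff 0 = 1) (hfm : f.natDegree < m) (hgn : g.natDegree < n)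
    (hm : m ≤ ℓ + 1) (hn : n ≤ ℓ + 1)
    (hj : j < Fintype.card Fq - 1) (hi : i < Fintype.card Fq - 1)
    {β : L} (hβ : β ≠ 0) {u₁ u₂ v₁ v₂ : K} (hu₁ : u₁ ≠ 0) (hu : ∀ c : Fq, u₂ ≠ c • u₁)
    (h₁ : β * aeval γ (stepPoly (Fintype.card Fq) ω f m a j u₁)
      = aeval γ (stepPoly (Fintype.card Fq) ω g n b i v₁))
    (h₂ : β * aeval γ (stepPoly (Fintype.card Fq) ω f m a j u₂)
      = aeval γ (stepPoly (Fintype.card Fq) ω g n b i v₂)) :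
    m = n ∧ f = g ∧ a = b ∧ j = i ∧ ∃ c : Fq, c ≠ 0 ∧ β = algebraMap K L (algebraMap Fq K c) ∧
      v₁ = c • u₁ ∧ v₂ = c • u₂ := by
  have hq1 : 1 < Fintype.card Fq := Fintype.one_lt_card
  set q := Fintype.card Fq with hq
  have hu₂ : u₂ ≠ 0 := by simpa using hu 0
  -- The products below have degree less than that of `γ`, so the identity between their values
  -- at `γ` is an identity of polynomials.
  have hpoly : stepPoly q ω f m a j u₁ * stepPoly q ω g n b i v₂
      = stepPoly q ω f m a j u₂ * stepPoly q ω g n b i v₁ := by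
    rw [← sub_eq_zero]
    apply aeval_eq_zero_of_natDegree_lt (γ := γ)
    · refine lt_of_le_of_lt ?_ hℓ
      have d := fun u => stepPoly_natDegree_le q ω f m a j u hfm
      have d' := fun u => stepPoly_natDegree_le q ω g n b i u hgn
      refine (natDegree_sub_le _ _).trans (max_le ?_ ?_)
      · refine natDegree_mul_le.trans ?_
        have := d u₁; have := d' v₂; omega
      · refine natDegree_mul_le.trans ?_
        have := d u₂; have := d' v₁; omega
    · apply mul_left_cancel₀ hβ
      simp only [map_sub, map_mul]
      rw [mul_sub, ← mul_assoc, ← mul_assoc, h₁, h₂]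
      ring
  have hne : ∀ u : K, u ≠ 0 → aeval γ (stepPoly q ω f m a j u) ≠ 0 := by
    intro u hu h0
    have d := stepPoly_natDegree_le q ω f m a j u hfm
    have := aeval_eq_zero_of_natDegree_lt (by omega) h0
    have h2 := stepPoly_coeff_zero q ω f m a j u hf0 hfm
    rw [this] at h2
    exact hu (by simpa using h2.symm)
  have hv₁ : v₁ ≠ 0 := by
    rintro rfl
    apply mul_ne_zero hβ (hne u₁ hu₁)
    rw [h₁, stepPoly_eq_mul hq1.le]
    simp
  have hconst : u₁ * v₂ = u₂ * v₁ := by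
    have := congrArg (fun P => P.coeff 0) hpoly
    simpa [mul_coeff_zero, stepPoly_coeff_zero _ _ _ _ _ _ _ hf0 hfm,
      stepPoly_coeff_zero _ _ _ _ _ _ _ hg0 hgn] using this
  obtain ⟨c, rfl⟩ : ∃ c, v₁ = c * u₁ := ⟨v₁ / u₁, by field_simp⟩
  have hc : c ≠ 0 := left_ne_zero_of_mul hv₁
  obtain rfl : v₂ = c * u₂ := by
    apply mul_left_cancel₀ hu₁
    rw [hconst]; ring
  have hpen : (f + C (ω ^ j * (u₁ ^ (q - 1) + a)) * X ^ m)
      * (g + C (ω ^ i * ((c * u₂) ^ (q - 1) + b)) * X ^ n)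
      = (f + C (ω ^ j * (u₂ ^ (q - 1) + a)) * X ^ m)
      * (g + C (ω ^ i * ((c * u₁) ^ (q - 1) + b)) * X ^ n) := by
    have hC : (C (u₁ * (c * u₂)) : K[X]) ≠ 0 := by simp [hu₁, hu₂, hc]
    apply mul_left_cancel₀ hC
    simp only [stepPoly_eq_mul hq1.le] at hpoly
    simp only [map_mul (C : K →+* K[X]) u₁, map_mul (C : K →+* K[X]) c] at hpoly ⊢
    linear_combination hpoly
  -- Elements with equal `(q - 1)`-th powers differ by a factor in `Fq`.
  have hroot : ∀ x : K, x ^ (q - 1) = 1 → ∃ c : Fq, algebraMap Fq K c = x := by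
    intro x hx
    apply mem_range_of_pow_card
    rw [← hq, ← Nat.sub_add_cancel hq1.le, pow_succ, hx, one_mul]
  have ht : u₁ ^ (q - 1) ≠ u₂ ^ (q - 1) := by
    intro h
    obtain ⟨d, hd⟩ := hroot (u₂ / u₁) (by rw [div_pow, h, div_self (pow_ne_zero _ hu₂)])
    apply hu d
    rw [Algebra.smul_def, hd]; field_simp
  have hωp : ∀ r, ω ^ r ≠ 0 := fun r => pow_ne_zero _ hω0
  obtain ⟨rfl, rfl, e₁, e₂⟩ := pencil_rigidity hf0 hg0 hfm hgn
    (by simpa [hωp] using ht) (by simpa [hωp, mul_pow, hc] using ht) hpen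
  have hωc : ω ^ j = ω ^ i * c ^ (q - 1) := by
    apply mul_right_cancel₀ (sub_ne_zero.2 ht)
    rw [mul_pow] at e₁ e₂
    linear_combination e₁ - e₂
  obtain rfl := exponent_eq (Fq := Fq) hω0 hω hc hi hj hωc
  have hc1 : c ^ (q - 1) = 1 := by
    apply mul_left_cancel₀ (hωp j)
    rw [← hωc, mul_one]
  obtain ⟨d, rfl⟩ := hroot c hc1
  have hab : a = b := by
    apply mul_left_cancel₀ (hωp j)
    rw [mul_pow, hc1] at e₁
    linear_combination e₁
  subst hab
  refine ⟨rfl, rfl, rfl, rfl, d, by simpa using hc, ?_, by rw [Algebra.smul_def],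
    by rw [Algebra.smul_def]⟩
  apply mul_right_cancel₀ (hne u₁ hu₁)
  rw [h₁]
  have : stepPoly q ω f m a j (algebraMap Fq K d * u₁)
      = C (algebraMap Fq K d) * stepPoly q ω f m a j u₁ := by
    rw [stepPoly_eq_mul hq1.le, stepPoly_eq_mul hq1.le, mul_pow, hc1]
    simp only [map_mul, one_mul]
    ring
  rw [this, map_mul, aeval_C]

/-! ### Multiplier polynomials -/

/-- The multiplier polynomial `1 + v₀ X + ⋯ + v_{l-1} X^l`. -/
def multPoly {K : Type*} [Field K] {l : ℕ} (v : Fin l → K) : K[X] :=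
  1 + ∑ i : Fin l, C (v i) * X ^ ((i : ℕ) + 1)

lemma multPoly_coeff_zero {K : Type*} [Field K] {l : ℕ} (v : Fin l → K) :
    (multPoly v).coeff 0 = 1 := by
  simp [multPoly, coeff_X_pow]

lemma multPoly_coeff_succ {K : Type*} [Field K] {l : ℕ} (v : Fin l → K) (i : Fin l) :
    (multPoly v).coeff ((i : ℕ) + 1) = v i := by
  simp [multPoly, coeff_X_pow, coeff_one, ← Fin.ext_iff]

lemma multPoly_natDegree_le {K : Type*} [Field K] {l : ℕ} (v : Fin l → K) :
    (multPoly v).natDegree ≤ l := by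
  refine (natDegree_add_le _ _).trans (max_le (by simp) ?_)
  refine natDegree_sum_le_of_forall_le _ _ fun i _ => ?_
  exact (natDegree_C_mul_X_pow_le _ _).trans (by omega)

lemma multPoly_injective {K : Type*} [Field K] {l : ℕ} :
    Function.Injective (multPoly : (Fin l → K) → K[X]) := by
  intro v w h
  ext i
  rw [← multPoly_coeff_succ v i, h, multPoly_coeff_succ]

lemma multPoly_coeff {K : Type*} [Field K] {l : ℕ} {f : K[X]} (hf0 : f.coeff 0 = 1)
    (hf : f.natDegree ≤ l) : multPoly (fun i : Fin l => f.coeff ((i : ℕ) + 1)) = f := by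
  conv_rhs => rw [as_sum_range_C_mul_X_pow' f (Nat.lt_succ_of_le hf)]
  rw [Finset.sum_range_succ', multPoly, hf0,
    Fin.sum_univ_eq_sum_range (fun i => C (f.coeff (i + 1)) * X ^ (i + 1))]
  simp [add_comm]

lemma multPoly_eq_sum_Icc {K : Type*} [Field K] (l : ℕ) (α : ℕ → K) :
    multPoly (fun i : Fin l => α ((i : ℕ) + 1)) = 1 + ∑ t ∈ Finset.Icc 1 l, C (α t) * X ^ t := by
  rw [multPoly, Fin.sum_univ_eq_sum_range (fun i => C (α (i + 1)) * X ^ (i + 1)),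
    Finset.range_eq_Ico, Finset.sum_Ico_add' (fun i => C (α i) * X ^ i) 0 l 1]
  rfl

/-! ### Scaled subspaces -/

section Subspaces

variable {Fq L : Type*} [Field Fq] [Field L] [Algebra Fq L]

lemma mem_mulSub {β x : L} {X : Submodule Fq L} : x ∈ mulSub β X ↔ ∃ y ∈ X, β * y = x := by
  simp [mulSub, Submodule.mem_map]

lemma mulSub_mulSub (β δ : L) (X : Submodule Fq L) :
    mulSub δ (mulSub β X) = mulSub (δ * β) X := by
  ext x
  simp only [mem_mulSub]
  constructor
  · rintro ⟨_, ⟨y, hy, rfl⟩, rfl⟩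
    exact ⟨y, hy, by ring⟩
  · rintro ⟨y, hy, rfl⟩
    exact ⟨_, ⟨y, hy, rfl⟩, by ring⟩

lemma mulSub_algebraMap {c : Fq} (hc : c ≠ 0) (X : Submodule Fq L) :
    mulSub (algebraMap Fq L c) X = X := by
  ext x
  simp only [mem_mulSub, ← Algebra.smul_def]
  constructor
  · rintro ⟨y, hy, rfl⟩
    exact X.smul_mem c hy
  · intro hx
    exact ⟨c⁻¹ • x, X.smul_mem _ hx, by rw [smul_smul, mul_inv_cancel₀ hc, one_smul]⟩

lemma mulSub_algebraMap_mul {c : Fq} (hc : c ≠ 0) (β : L) (X : Submodule Fq L) :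
    mulSub (algebraMap Fq L c * β) X = mulSub β X := by
  rw [← mulSub_mulSub, mulSub_algebraMap hc]

lemma finrank_mulSub {β : L} (hβ : β ≠ 0) (X : Submodule Fq L) :
    finrank Fq (mulSub β X) = finrank Fq X :=
  (LinearEquiv.finrank_eq (Submodule.equivMapOfInjective (LinearMap.mulLeft Fq β)
    (mul_right_injective₀ hβ) X)).symm

/-- A code in which two members sharing two independent vectors coincide. -/
def MeetsInLines (S : Set (Submodule Fq L)) : Prop :=
  ∀ U ∈ S, ∀ V ∈ S, ∀ x y : L, x ∈ U → y ∈ U → x ∈ V → y ∈ V → x ≠ 0 →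
    (∀ c : Fq, y ≠ c • x) → U = V

lemma exists_indep {X : Submodule Fq L} (h : 2 ≤ finrank Fq X) :
    ∃ x ∈ X, ∃ y ∈ X, x ≠ 0 ∧ ∀ c : Fq, y ≠ c • x := by
  by_contra! hcon
  have hne : X ≠ ⊥ := by rintro rfl; simp at h
  obtain ⟨x, hx, hx0⟩ := X.ne_bot_iff.1 hne
  have : finrank Fq X ≤ 1 := by
    refine finrank_le_one ⟨x, hx⟩ fun w => ?_
    obtain ⟨c, hc⟩ := hcon x hx w w.2 hx0
    exact ⟨c, Subtype.ext hc.symm⟩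
  omega

end Subspaces

/-! ### One step of the construction -/

/-- The parameters of an admissible map: `ℓ₁`, the multiplier coefficients, `a` and the exponent
of `ω`. The multiplier is recorded by all its coefficients up to degree `ℓ₁`, so that its degree
`ℓ₀` is implicit and distinct parameters give distinct maps. -/
abbrev StepParam (K : Type*) (q ℓ : ℕ) : Type _ :=
  Σ l : Fin (ℓ + 1), (Fin (l : ℕ) → K) × K × Fin (q - 1)

lemma card_stepParam {K : Type*} [Finite K] (q ℓ : ℕ) : Nat.card (StepParam K q ℓ)
    = (∑ l ∈ Finset.range (ℓ + 1), Nat.card K ^ l) * (Nat.card K * (q - 1)) := by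
  rw [Nat.card_sigma, Finset.sum_mul, ← Fin.sum_univ_eq_sum_range
    (fun l => Nat.card K ^ l * (Nat.card K * (q - 1)))]
  simp [Nat.card_fun]

/-- The group `Fqˣ` inside `Lˣ`. -/
def scalarUnits (Fq L : Type*) [Field Fq] [Field L] [Algebra Fq L] : Subgroup Lˣ :=
  (Units.map (algebraMap Fq L : Fq →* L)).range

lemma card_scalarUnits {Fq L : Type*} [Field Fq] [Fintype Fq] [Field L] [Algebra Fq L] :
    Nat.card (scalarUnits Fq L) = Fintype.card Fq - 1 := by
  have hinj : Function.Injective (Units.map (algebraMap Fq L : Fq →* L)) :=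
    Units.map_injective (algebraMap Fq L).injective
  rw [scalarUnits, ← Nat.card_congr (MonoidHom.ofInjective hinj).toEquiv, Nat.card_units,
    Nat.card_eq_fintype_card]

section Step

variable {Fq K L : Type*} [Field Fq] [Fintype Fq] [Field K] [Field L]
  [Algebra Fq K] [Algebra K L] [Algebra Fq L] [IsScalarTower Fq K L]

variable (Fq) in
/-- The admissible map with the given parameters, as an `Fq`-linear map. -/
def stepMap (ω : K) (γ : L) {ℓ : ℕ} (t : StepParam K (Fintype.card Fq) ℓ) : K →ₗ[Fq] L where
  toFun u := aeval γ (stepPoly (Fintype.card Fq) ω (multPoly t.2.1) (t.1 + 1) t.2.2.1 t.2.2.2 u)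
  map_add' u v := by
    have h : (u + v) ^ Fintype.card Fq = u ^ Fintype.card Fq + v ^ Fintype.card Fq :=
      map_add (FiniteField.frobeniusAlgHom Fq K) u v
    rw [← map_add]
    congr 1
    simp only [stepPoly, h, map_add, map_mul]
    ring
  map_smul' c u := by
    have h : (c • u) ^ Fintype.card Fq = c • u ^ Fintype.card Fq :=
      map_smul (FiniteField.frobeniusAlgHom Fq K) c u
    simp only [stepPoly, h]
    simp only [map_add, map_mul, aeval_C, RingHom.id_apply, Algebra.smul_def,
      ← IsScalarTower.algebraMap_apply]
    ring

lemma stepMap_apply (ω : K) (γ : L) {ℓ : ℕ} (t : StepParam K (Fintype.card Fq) ℓ) (u : K) :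
    stepMap Fq ω γ t u =
      aeval γ (stepPoly (Fintype.card Fq) ω (multPoly t.2.1) (t.1 + 1) t.2.2.1 t.2.2.2 u) := rfl

/-- The subspaces obtained from members of `S` by one step of the nested construction. -/
def nextCode (q ℓ : ℕ) (ω : K) (γ : L) (S : Set (Submodule Fq K)) : Set (Submodule Fq L) :=
  {X | ∃ U ∈ S, ∃ (β : Lˣ) (l0 : ℕ) (α : ℕ → K) (a : K) (j l1 : ℕ),
          l0 ≤ ℓ ∧ (1 ≤ l0 → α l0 ≠ 0) ∧ j ≤ q - 2 ∧
          l0 ≤ l1 ∧ l1 ≤ ℓ ∧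
          ∃ Φ : K →ₗ[Fq] L,
            (∀ u : K, Φ u = algebraMap K L u *
                (1 + ∑ t ∈ Finset.Icc 1 l0, algebraMap K L (α t) * γ ^ t)
              + algebraMap K L (ω ^ j * (u ^ q + a * u)) * γ ^ (l1 + 1)) ∧
            X = mulSub (β : L) (Submodule.map Φ U)}

/-- One step of the construction, in terms of the irredundant parameters. -/
lemma mem_nextCode_iff {ℓ : ℕ} (ω : K) (γ : L) (S : Set (Submodule Fq K)) (X : Submodule Fq L) :
    X ∈ nextCode (Fintype.card Fq) ℓ ω γ S ↔
      ∃ U ∈ S, ∃ (β : Lˣ) (t : StepParam K (Fintype.card Fq) ℓ),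
        X = mulSub (β : L) (Submodule.map (stepMap Fq ω γ t) U) := by
  have hq1 : 1 < Fintype.card Fq := Fintype.one_lt_card
  constructor
  · rintro ⟨U, hU, β, l0, α, a, j, l1, h0, hα, hj, h01, h1, Φ, hΦ, rfl⟩
    set f : K[X] := multPoly (fun i : Fin l0 => α ((i : ℕ) + 1)) with hf
    refine ⟨U, hU, β, ⟨⟨l1, by omega⟩, fun i => f.coeff ((i : ℕ) + 1), a, ⟨j, by omega⟩⟩, ?_⟩
    congr 2
    ext u
    rw [hΦ, stepMap_apply]
    dsimp only
    rw [multPoly_coeff (multPoly_coeff_zero _) ((multPoly_natDegree_le _).trans h01),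
      multPoly_eq_sum_Icc]
    simp [stepPoly]
  · rintro ⟨U, hU, β, ⟨⟨l, hl⟩, v, a, ⟨j, hj⟩⟩, rfl⟩
    have hd := multPoly_natDegree_le v
    refine ⟨U, hU, β, (multPoly v).natDegree, (multPoly v).coeff, a, j, l, by omega, ?_, by omega,
      hd, by omega, _, ?_, rfl⟩
    · intro h
      rw [coeff_natDegree, leadingCoeff_ne_zero]
      rintro h0
      simp [h0] at h
    · intro u
      have := multPoly_eq_sum_Icc (multPoly v).natDegree (multPoly v).coeff
      rw [multPoly_coeff (multPoly_coeff_zero v) le_rfl] at this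
      rw [stepMap_apply]
      dsimp only
      simp only [stepPoly, map_add, map_mul, aeval_C, map_pow, aeval_X]
      conv_lhs => rw [this]
      simp

variable {ω : K} {γ : L} {ℓ : ℕ}

lemma stepMap_injective (hℓ : 2 * (ℓ + 1) < (minpoly K γ).natDegree)
    (t : StepParam K (Fintype.card Fq) ℓ) : Function.Injective (stepMap Fq ω γ t) := by
  rw [← LinearMap.ker_eq_bot, LinearMap.ker_eq_bot']
  intro u hu
  have hd := multPoly_natDegree_le t.2.1
  have hl := t.1.2
  have h1 := stepPoly_natDegree_le (Fintype.card Fq) ω (multPoly t.2.1) (t.1 + 1) t.2.2.1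
    t.2.2.2 u (by omega)
  have h2 := aeval_eq_zero_of_natDegree_lt (by omega) hu
  have h3 := stepPoly_coeff_zero (Fintype.card Fq) ω (multPoly t.2.1) (t.1 + 1) t.2.2.1
    t.2.2.2 u (multPoly_coeff_zero _) (by omega)
  rw [h2] at h3
  simpa using h3.symm

/-- Two scaled images sharing two independent vectors come from the same parameters, with scaling
factors proportional over `Fq`, and from subspaces that share two independent vectors. -/
lemma image_rigidity [Finite K] (hℓ : 2 * (ℓ + 1) < (minpoly K γ).natDegree)
    (hω0 : ω ≠ 0) (hω : ∀ x : K, x ≠ 0 → ∃ j : ℕ, ω ^ j = x)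
    {t t' : StepParam K (Fintype.card Fq) ℓ} {β β' : L} (hβ : β ≠ 0) (hβ' : β' ≠ 0)
    {U V : Submodule Fq K} {x y : L}
    (hxU : x ∈ mulSub β (U.map (stepMap Fq ω γ t))) (hyU : y ∈ mulSub β (U.map (stepMap Fq ω γ t)))
    (hxV : x ∈ mulSub β' (V.map (stepMap Fq ω γ t')))
    (hyV : y ∈ mulSub β' (V.map (stepMap Fq ω γ t')))
    (hx0 : x ≠ 0) (hxy : ∀ c : Fq, y ≠ c • x) :
    t = t' ∧ (∃ c : Fq, c ≠ 0 ∧ β = algebraMap Fq L c * β') ∧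
      ∃ u₁ u₂ : K, u₁ ∈ U ∧ u₂ ∈ U ∧ u₁ ∈ V ∧ u₂ ∈ V ∧ u₁ ≠ 0 ∧ ∀ c : Fq, u₂ ≠ c • u₁ := by
  simp only [mem_mulSub, Submodule.mem_map] at hxU hyU hxV hyV
  obtain ⟨_, ⟨u₁, hu₁, rfl⟩, rfl⟩ := hxU
  obtain ⟨_, ⟨u₂, hu₂, rfl⟩, rfl⟩ := hyU
  obtain ⟨_, ⟨v₁, hv₁, rfl⟩, e₁⟩ := hxV
  obtain ⟨_, ⟨v₂, hv₂, rfl⟩, e₂⟩ := hyV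
  have hu0 : u₁ ≠ 0 := by rintro rfl; simp at hx0
  have hu : ∀ c : Fq, u₂ ≠ c • u₁ := by
    rintro c rfl
    apply hxy c
    rw [map_smul, mul_smul_comm]
  have hr := step_rigidity hℓ hω0 hω (f := multPoly t.2.1) (g := multPoly t'.2.1)
    (m := t.1 + 1) (n := t'.1 + 1) (a := t.2.2.1) (b := t'.2.2.1) (j := t.2.2.2) (i := t'.2.2.2)
    (multPoly_coeff_zero _) (multPoly_coeff_zero _)
    (Nat.lt_succ_of_le (multPoly_natDegree_le _)) (Nat.lt_succ_of_le (multPoly_natDegree_le _))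
    (by omega) (by omega) t.2.2.2.2 t'.2.2.2.2 (β := β'⁻¹ * β) (by simp [hβ, hβ'])
    hu0 hu (v₁ := v₁) (v₂ := v₂)
    (by
      simp only [← stepMap_apply (Fq := Fq)]
      rw [mul_assoc, ← e₁, inv_mul_cancel_left₀ hβ'])
    (by
      simp only [← stepMap_apply (Fq := Fq)]
      rw [mul_assoc, ← e₂, inv_mul_cancel_left₀ hβ'])
  obtain ⟨hm, hf, ha, hj, c, hc, hβc, rfl, rfl⟩ := hr
  refine ⟨?_, ⟨c, hc, ?_⟩, u₁, u₂, hu₁, hu₂, ?_, ?_, hu0, hu⟩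
  · obtain ⟨⟨l, hl⟩, v, a, j⟩ := t
    obtain ⟨⟨l', hl'⟩, v', a', j'⟩ := t'
    obtain rfl : l = l' := by simpa using hm
    obtain rfl : v = v' := multPoly_injective hf
    obtain rfl : a = a' := ha
    obtain rfl : j = j' := Fin.ext hj
    rfl
  · rw [IsScalarTower.algebraMap_apply Fq K L, ← hβc]
    field_simp
  · simpa [smul_smul, inv_mul_cancel₀ hc] using V.smul_mem c⁻¹ hv₁
  · simpa [smul_smul, inv_mul_cancel₀ hc] using V.smul_mem c⁻¹ hv₂

variable {k : ℕ} {S : Set (Submodule Fq K)}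

lemma nextCode_finrank (hℓ : 2 * (ℓ + 1) < (minpoly K γ).natDegree)
    (hS : ∀ U ∈ S, finrank Fq U = k) :
    ∀ X ∈ nextCode (Fintype.card Fq) ℓ ω γ S, finrank Fq X = k := by
  intro X hX
  obtain ⟨U, hU, β, t, rfl⟩ := (mem_nextCode_iff ω γ S X).1 hX
  rw [finrank_mulSub β.ne_zero, ← hS U hU]
  exact (LinearEquiv.finrank_eq (Submodule.equivMapOfInjective _ (stepMap_injective hℓ t) U)).symm

lemma nextCode_mulSub : ∀ X ∈ nextCode (Fintype.card Fq) ℓ ω γ S, ∀ u : Lˣ,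
    mulSub (u : L) X ∈ nextCode (Fintype.card Fq) ℓ ω γ S := by
  intro X hX u
  obtain ⟨U, hU, β, t, rfl⟩ := (mem_nextCode_iff ω γ S X).1 hX
  exact (mem_nextCode_iff ω γ S _).2 ⟨U, hU, u * β, t, by rw [mulSub_mulSub, Units.val_mul]⟩

lemma nextCode_meetsInLines [Finite K] (hℓ : 2 * (ℓ + 1) < (minpoly K γ).natDegree)
    (hω0 : ω ≠ 0) (hω : ∀ x : K, x ≠ 0 → ∃ j : ℕ, ω ^ j = x) (hS : MeetsInLines S) :
    MeetsInLines (nextCode (Fintype.card Fq) ℓ ω γ S) := by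
  intro X hX Y hY x y hxX hyX hxY hyY hx0 hxy
  obtain ⟨U, hU, β, t, rfl⟩ := (mem_nextCode_iff ω γ S X).1 hX
  obtain ⟨V, hV, β', t', rfl⟩ := (mem_nextCode_iff ω γ S Y).1 hY
  obtain ⟨rfl, ⟨c, hc, hcβ⟩, u₁, u₂, h₁, h₂, h₃, h₄, h₅, h₆⟩ :=
    image_rigidity hℓ hω0 hω β.ne_zero β'.ne_zero hxX hyX hxY hyY hx0 hxy
  obtain rfl := hS U hU V hV u₁ u₂ h₁ h₂ h₃ h₄ h₅ h₆
  rw [hcβ, mulSub_algebraMap_mul hc]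

lemma nextCode_fullLength [Finite K] (hℓ : 2 * (ℓ + 1) < (minpoly K γ).natDegree)
    (hω0 : ω ≠ 0) (hω : ∀ x : K, x ≠ 0 → ∃ j : ℕ, ω ^ j = x) (hk : 2 ≤ k)
    (hS : ∀ U ∈ S, finrank Fq U = k) :
    ∀ X ∈ nextCode (Fintype.card Fq) ℓ ω γ S, FullLengthOrbit X := by
  intro X hX δ hδ hδX
  obtain ⟨x, hx, y, hy, hx0, hxy⟩ := exists_indep (hk.trans (nextCode_finrank hℓ hS X hX).ge)
  obtain ⟨U, hU, β, t, rfl⟩ := (mem_nextCode_iff ω γ S X).1 hX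
  have hx' := hδX.ge hx
  have hy' := hδX.ge hy
  rw [mulSub_mulSub] at hx' hy'
  obtain ⟨-, ⟨c, hc, hcβ⟩, -⟩ := image_rigidity hℓ hω0 hω (mul_ne_zero hδ β.ne_zero) β.ne_zero
    hx' hy' hx hy hx0 hxy
  exact ⟨c, (mul_right_cancel₀ β.ne_zero hcβ).symm⟩

/-- One step multiplies the size of the code by a fixed factor: the codewords correspond
bijectively to triples of a unit modulo `Fqˣ`, a parameter and a codeword of the previous level. -/
lemma nextCode_ncard [Finite K] [Finite L] (hℓ : 2 * (ℓ + 1) < (minpoly K γ).natDegree)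
    (hω0 : ω ≠ 0) (hω : ∀ x : K, x ≠ 0 → ∃ j : ℕ, ω ^ j = x) (hk : 2 ≤ k)
    (hS : ∀ U ∈ S, finrank Fq U = k) (hS2 : MeetsInLines S) :
    (nextCode (Fintype.card Fq) ℓ ω γ S).ncard = S.ncard *
      (Nat.card K * (Nat.card K ^ (ℓ + 1) - 1) * ((Nat.card L - 1) / (Nat.card K - 1))) := by
  let G : (Lˣ ⧸ scalarUnits Fq L) × StepParam K (Fintype.card Fq) ℓ × S → Submodule Fq L :=
    fun r => mulSub (r.1.out : L) ((r.2.2 : Submodule Fq K).map (stepMap Fq ω γ r.2.1))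
  have hmem : ∀ r, G r ∈ nextCode (Fintype.card Fq) ℓ ω γ S := fun r =>
    (mem_nextCode_iff ω γ S _).2 ⟨r.2.2, r.2.2.2, r.1.out, r.2.1, rfl⟩
  have hG : Function.Injective G := by
    rintro ⟨b, t, U, hU⟩ ⟨b', t', V, hV⟩ h
    obtain ⟨x, hx, y, hy, hx0, hxy⟩ := exists_indep
      (hk.trans (nextCode_finrank hℓ hS _ (hmem ⟨b, t, U, hU⟩)).ge)
    have hx' := h.le hx
    have hy' := h.le hy
    obtain ⟨rfl, ⟨c, hc, hcβ⟩, u₁, u₂, h₁, h₂, h₃, h₄, h₅, h₆⟩ :=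
      image_rigidity hℓ hω0 hω b.out.ne_zero b'.out.ne_zero hx hy hx' hy' hx0 hxy
    obtain rfl := hS2 U hU V hV u₁ u₂ h₁ h₂ h₃ h₄ h₅ h₆
    obtain rfl : b = b' := by
      rw [← b.out_eq', ← b'.out_eq']
      have hin : b'.out⁻¹ * b.out ∈ scalarUnits Fq L := ⟨Units.mk0 c hc, ?_⟩
      · exact (QuotientGroup.eq.2 hin).symm
      ext
      simp only [Units.coe_map, Units.val_mk0, MonoidHom.coe_coe, Units.val_mul,
        Units.val_inv_eq_inv_val]
      rw [hcβ]
      have := b'.out.ne_zero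
      field_simp
    rfl
  have hrange : Set.range G = nextCode (Fintype.card Fq) ℓ ω γ S := by
    apply Set.Subset.antisymm
    · rintro _ ⟨r, rfl⟩
      exact hmem r
    · intro X hX
      obtain ⟨U, hU, β, t, rfl⟩ := (mem_nextCode_iff ω γ S X).1 hX
      refine ⟨⟨(β : Lˣ ⧸ scalarUnits Fq L), t, U, hU⟩, ?_⟩
      obtain ⟨⟨_, c, rfl⟩, hc⟩ := QuotientGroup.mk_out_eq_mul (scalarUnits Fq L) β
      change mulSub (((β : Lˣ ⧸ scalarUnits Fq L).out : Lˣ) : L) _ = _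
      rw [hc, mul_comm]
      exact mulSub_algebraMap_mul c.ne_zero _ _
  rw [← hrange, ← Set.image_univ, Set.ncard_image_of_injective _ hG, Set.ncard_univ,
    Nat.card_prod, Nat.card_prod, card_stepParam, Nat.card_coe_set_eq]
  have hquot := Subgroup.card_eq_card_quotient_mul_card_subgroup (scalarUnits Fq L)
  rw [card_scalarUnits, Nat.card_units] at hquot
  have hKcard : 1 < Nat.card K := Finite.one_lt_card
  have hdvd : Nat.card K - 1 ∣ Nat.card L - 1 := by
    rw [Module.natCard_eq_pow_finrank (K := K) (V := L)]
    simpa only [one_pow] using Nat.sub_dvd_pow_sub_pow (Nat.card K) 1 (finrank K L)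
  have hgeom : (∑ l ∈ Finset.range (ℓ + 1), Nat.card K ^ l) * (Nat.card K - 1)
      = Nat.card K ^ (ℓ + 1) - 1 := by
    have := Nat.geomSum_eq hKcard (ℓ + 1)
    rw [this]
    apply Nat.div_mul_cancel
    simpa only [one_pow] using Nat.sub_dvd_pow_sub_pow (Nat.card K) 1 (ℓ + 1)
  rw [← hgeom]
  obtain ⟨r, hr⟩ := hdvd
  rw [hr, Nat.mul_div_cancel_left _ (by omega)]
  rw [hr] at hquot
  linear_combination
    (S.ncard * (∑ l ∈ Finset.range (ℓ + 1), Nat.card K ^ l) * Nat.card K) * hquot.symm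

end Step

/-! ### The tower and the minimum distance -/

/-- Membership in recursively generated sets amounts to the existence of a chain of choices. -/
lemma mem_iff_exists_chain {A : ℕ → Type*} (S : (s : ℕ) → Set (A s)) [∀ s, Nonempty (A s)]
    (x0 : A 0) (R : (s : ℕ) → A s → A (s + 1) → Prop) (h0 : S 0 = {x0})
    (hS : ∀ s X, X ∈ S (s + 1) ↔ ∃ U ∈ S s, R s U X) (N : ℕ) (X : A N) :
    X ∈ S N ↔ ∃ W : (i : ℕ) → A i, W 0 = x0 ∧ (∀ s, s < N → R s (W s) (W (s + 1))) ∧ X = W N := by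
  classical
  induction N with
  | zero =>
    rw [h0]
    constructor
    · rintro rfl
      exact ⟨Function.update (fun i => Classical.arbitrary (A i)) 0 X, by simp, by simp, by simp⟩
    · rintro ⟨W, hW, -, rfl⟩
      exact hW
  | succ N ih =>
    rw [hS]
    constructor
    · rintro ⟨U, hU, hR⟩
      obtain ⟨W, hW0, hW, rfl⟩ := (ih U).1 hU
      refine ⟨Function.update W (N + 1) X, ?_, ?_, ?_⟩
      · rw [Function.update_of_ne (by omega), hW0]
      · intro s hs
        rw [Function.update_of_ne (by omega)]
        rcases Nat.lt_succ_iff_lt_or_eq.1 hs with h | rfl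
        · rw [Function.update_of_ne (by omega)]
          exact hW s h
        · rw [Function.update_self]
          exact hR
      · rw [Function.update_self]
    · rintro ⟨W, hW0, hW, rfl⟩
      exact ⟨W N, (ih _).2 ⟨W, hW0, fun s hs => hW s (by omega), rfl⟩, hW N (by omega)⟩

/-- The nested code at each level of a tower of fields. -/
def nestedCode {Fq : Type*} [Field Fq] [Fintype Fq] (F : ℕ → Type*) [∀ i, Field (F i)]
    [∀ i, Algebra Fq (F i)] [∀ i, Algebra (F i) (F (i + 1))]
    [∀ i, IsScalarTower Fq (F i) (F (i + 1))] (q : ℕ) (ℓ : ℕ → ℕ)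
    (ω : (s : ℕ) → F s) (γ : (s : ℕ) → F (s + 1)) : (s : ℕ) → Set (Submodule Fq (F s))
  | 0 => {⊤}
  | s + 1 => nextCode q (ℓ s) (ω s) (γ s) (nestedCode F q ℓ ω γ s)

/-- In a nonempty code of dimension `k ≥ 2` that is closed under scaling, all of whose members have
full-length orbits and pairwise meet in dimension at most one, the minimum distance is `2k - 2`.
It is attained by `X` and `(y/x)X` for independent `x, y ∈ X`, which share `y`. -/
lemma minDist_eq {Fq L : Type*} [Field Fq] [Field L] [Algebra Fq L] [FiniteDimensional Fq L]
    {C : Set (Submodule Fq L)} {k : ℕ} (hk : 2 ≤ k) (hne : C.Nonempty)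
    (hdim : ∀ X ∈ C, finrank Fq X = k) (hcyc : ∀ X ∈ C, ∀ u : Lˣ, mulSub (u : L) X ∈ C)
    (hmeet : MeetsInLines C) (hfull : ∀ X ∈ C, FullLengthOrbit X) :
    minDist C = 2 * k - 2 := by
  have hsd : ∀ U ∈ C, ∀ W ∈ C, sdist U W = 2 * k - 2 * finrank Fq ↥(U ⊓ W) := by
    intro U hU W hW
    have := Submodule.finrank_sup_add_finrank_inf_eq U W
    rw [hdim U hU, hdim W hW] at this
    unfold sdist
    omega
  have hle : ∀ U ∈ C, ∀ W ∈ C, U ≠ W → finrank Fq ↥(U ⊓ W) ≤ 1 := by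
    intro U hU W hW hUW
    by_contra! h
    obtain ⟨x, hx, y, hy, hx0, hxy⟩ := exists_indep h
    exact hUW (hmeet U hU W hW x y hx.1 hy.1 hx.2 hy.2 hx0 hxy)
  have hmem : 2 * k - 2 ∈ {d : ℕ | ∃ U ∈ C, ∃ W ∈ C, U ≠ W ∧ d = sdist U W} := by
    obtain ⟨X, hX⟩ := hne
    obtain ⟨x, hx, y, hy, hx0, hxy⟩ := exists_indep (hk.trans (hdim X hX).ge)
    have hy0 : y ≠ 0 := by simpa using hxy 0
    have hδ : y / x ≠ 0 := div_ne_zero hy0 hx0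
    have hX' := hcyc X hX (Units.mk0 _ hδ)
    rw [Units.val_mk0] at hX'
    have hneq : X ≠ mulSub (y / x) X := by
      intro h
      obtain ⟨c, hc⟩ := hfull X hX _ hδ h.symm
      apply hxy c
      rw [Algebra.smul_def, hc]
      field_simp
    refine ⟨X, hX, _, hX', hneq, ?_⟩
    have h1 := hle X hX _ hX' hneq
    have h2 : 0 < finrank Fq ↥(X ⊓ mulSub (y / x) X) := by
      rw [Module.finrank_pos_iff_exists_ne_zero]
      refine ⟨⟨y, hy, mem_mulSub.2 ⟨x, hx, by field_simp⟩⟩, ?_⟩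
      simpa [Subtype.ext_iff] using hy0
    rw [hsd X hX _ hX']
    omega
  refine le_antisymm (Nat.sInf_le hmem) (le_csInf ⟨_, hmem⟩ ?_)
  rintro d ⟨U, hU, W, hW, hUW, rfl⟩
  have := hle U hU W hW hUW
  rw [hsd U hU W hW]
  omega

/-- The nested construction in `G_q(p_z^{e_z}⋯p_1^{e_1}k, k)` for distinct
odd primes `p₁ > ⋯ > p_z` (0-indexed here: `p 0 > ⋯ > p (z-1)`).  The tower of fields
`F 0 = F_{q^k} ⊂ F 1 ⊂ ⋯ ⊂ F E` has `E = e₁+⋯+e_z` steps, where the degree of step `s`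
is the prime `step s` (equal to `p j` for `c j ≤ s < c (j+1)`).  At each step one uses the
admissible maps `u ↦ u(1+α₁γ+⋯+α_{ℓ₀}γ^{ℓ₀}) + ω^{j'}(u^q+au)γ^{ℓ₁+1}` with
`ℓ = (step s - 3)/2`, scaled by arbitrary units, and `C` is the set of all images of
`F_{q^k}` obtained by composing along the tower. -/
theorem statement9
    {Fq : Type*} [Field Fq] [Fintype Fq]
    (q k z : ℕ) (hq : Fintype.card Fq = q) (hk : 2 ≤ k) (hz : 1 ≤ z)
    (p e : ℕ → ℕ)
    (hp : ∀ j, j < z → (p j).Prime ∧ Odd (p j))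
    (hdec : ∀ j j', j < j' → j' < z → p j' < p j)
    (he : ∀ j, j < z → 1 ≤ e j)
    (c : ℕ → ℕ) (hc : ∀ j, c j = ∑ h ∈ Finset.range j, e h)
    (E : ℕ) (hE : E = c z)
    (step : ℕ → ℕ)
    (hstep : ∀ j, j < z → ∀ i, i < e j → step (c j + i) = p j)
    (F : ℕ → Type*) [∀ i, Field (F i)] [∀ i, Algebra Fq (F i)]
    [∀ i, Algebra (F i) (F (i + 1))] [∀ i, IsScalarTower Fq (F i) (F (i + 1))]
    (hdim : ∀ s, s ≤ E → finrank Fq (F s) = (∏ t ∈ Finset.range s, step t) * k)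
    (ω : (s : ℕ) → F s)
    (hω : ∀ s, s < E → ∀ x : F s, x ≠ 0 → ∃ j : ℕ, (ω s) ^ j = x)
    (γ : (s : ℕ) → F (s + 1))
    (hγ : ∀ s, s < E → Algebra.adjoin (F s) ({γ s} : Set (F (s + 1))) = ⊤)
    (C : Set (Submodule Fq (F E)))
    (hC : C = {X | ∃ W : (i : ℕ) → Submodule Fq (F i),
      W 0 = ⊤ ∧
      (∀ s, s < E →
        ∃ (β : (F (s + 1))ˣ) (l0 : ℕ) (α : ℕ → F s) (a : F s) (j l1 : ℕ),
          l0 ≤ (step s - 3) / 2 ∧ (1 ≤ l0 → α l0 ≠ 0) ∧ j ≤ q - 2 ∧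
          l0 ≤ l1 ∧ l1 ≤ (step s - 3) / 2 ∧
          ∃ Φ : F s →ₗ[Fq] F (s + 1),
            (∀ u : F s, Φ u = algebraMap (F s) (F (s + 1)) u *
                (1 + ∑ t ∈ Finset.Icc 1 l0,
                  algebraMap (F s) (F (s + 1)) (α t) * (γ s) ^ t)
              + algebraMap (F s) (F (s + 1)) ((ω s) ^ j * (u ^ q + a * u)) *
                  (γ s) ^ (l1 + 1)) ∧
            W (s + 1) = mulSub (β : F (s + 1)) (Submodule.map Φ (W s))) ∧
      X = W E}) :
    (∀ X ∈ C, finrank Fq ↥X = k) ∧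
    (∀ X ∈ C, ∀ u : (F E)ˣ, mulSub (u : F E) X ∈ C) ∧
    minDist C = 2 * k - 2 ∧
    C.ncard = ∏ j ∈ Finset.range z, ∏ i ∈ Finset.range (e j),
      q ^ (p j ^ i * (∏ h ∈ Finset.range j, p h ^ e h) * k) *
        (q ^ (((p j - 3) / 2 + 1) * p j ^ i * (∏ h ∈ Finset.range j, p h ^ e h) * k) - 1) *
        ((q ^ (p j ^ (i + 1) * (∏ h ∈ Finset.range j, p h ^ e h) * k) - 1) /
          (q ^ (p j ^ i * (∏ h ∈ Finset.range j, p h ^ e h) * k) - 1)) := by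
  subst hq
  set ℓ : ℕ → ℕ := fun s => (step s - 3) / 2 with hℓdef
  have hcsucc : ∀ j, c (j + 1) = c j + e j := fun j => by
    rw [hc, hc, Finset.sum_range_succ]
  -- Every step of the tower belongs to one of the blocks of steps of degree `p j`.
  have hblock : ∀ j, j ≤ z → ∀ s, s < c j → ∃ j' < z, ∃ i < e j', s = c j' + i := by
    intro j
    induction j with
    | zero => intro _ s hs; simp [hc] at hs
    | succ j ih =>
      intro hj s hs
      by_cases h : s < c j
      · exact ih (by omega) s h
      · rw [hcsucc] at hs
        exact ⟨j, by omega, s - c j, by omega, by omega⟩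
  have hodd : ∀ s, s < E → 2 * (ℓ s + 1) < step s ∧ 0 < step s := by
    intro s hs
    obtain ⟨j, hj, i, hi, rfl⟩ := hblock z le_rfl s (hE ▸ hs)
    obtain ⟨hpr, r, hr⟩ := hp j hj
    have h2 := hpr.two_le
    simp only [hℓdef]
    rw [hstep j hj i hi]
    omega
  have hpos : ∀ s, s ≤ E → 0 < finrank Fq (F s) := by
    intro s hs
    rw [hdim s hs]
    refine Nat.mul_pos (Finset.prod_pos fun t ht => (hodd t ?_).2) (by omega)
    have := Finset.mem_range.1 ht
    omega
  have hfd : ∀ s, s ≤ E → FiniteDimensional Fq (F s) := fun s hs =>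
    Module.finite_of_finrank_pos (hpos s hs)
  have hfin : ∀ s, s ≤ E → Finite (F s) := fun s hs => by
    have := hfd s hs
    exact Module.finite_of_finite Fq
  have hcard : ∀ s, s ≤ E → Nat.card (F s) = Fintype.card Fq ^ finrank Fq (F s) := by
    intro s hs
    have := hfd s hs
    rw [Module.natCard_eq_pow_finrank (K := Fq), Nat.card_eq_fintype_card]
  have hdeg : ∀ s, s < E → 2 * (ℓ s + 1) < (minpoly (F s) (γ s)).natDegree := by
    intro s hs
    have := hfd s hs.le
    have := hfd (s + 1) hs
    have := Module.Finite.of_restrictScalars_finite Fq (F s) (F (s + 1))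
    have hInt : IsIntegral (F s) (γ s) := IsIntegral.of_finite _ _
    have h1 : (minpoly (F s) (γ s)).natDegree = finrank (F s) (F (s + 1)) :=
      (PowerBasis.finrank (PowerBasis.ofAdjoinEqTop hInt (hγ s hs))).symm
    have h2 := finrank_mul_finrank Fq (F s) (F (s + 1))
    rw [hdim (s + 1) hs, Finset.prod_range_succ, mul_right_comm, ← hdim s hs.le] at h2
    rw [h1, Nat.eq_of_mul_eq_mul_left (hpos s hs.le) h2]
    exact (hodd s hs).1
  -- Otherwise `0` would be a primitive element, and `F s` would have two elements.
  have hω0 : ∀ s, s < E → ω s ≠ 0 := by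
    intro s hs h0
    have hall : ∀ x : F s, x ≠ 0 → x = 1 := by
      intro x hx
      obtain ⟨j, hj⟩ := hω s hs x hx
      rw [h0] at hj
      rcases Nat.eq_zero_or_pos j with rfl | hj'
      · simpa using hj.symm
      · rw [zero_pow hj'.ne'] at hj
        exact absurd hj.symm hx
    have h1 : finrank Fq (F s) ≤ 1 := by
      refine finrank_le_one (1 : F s) fun w => ?_
      by_cases hw : w = 0
      · exact ⟨0, by simp [hw]⟩
      · exact ⟨1, by rw [hall w hw, one_smul]⟩
    rw [hdim s hs.le] at h1
    have hP : 0 < ∏ t ∈ Finset.range s, step t := Finset.prod_pos fun t ht =>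
      (hodd t ((Finset.mem_range.1 ht).trans hs)).2
    nlinarith
  let D := nestedCode (Fq := Fq) F (Fintype.card Fq) ℓ ω γ
  have hCD : C = D E := by
    rw [hC]
    ext X
    exact (mem_iff_exists_chain D ⊤ _ rfl (fun s X => Iff.rfl) E X).symm
  let φ : ℕ → ℕ := fun t => Nat.card (F t) * (Nat.card (F t) ^ (ℓ t + 1) - 1) *
    ((Nat.card (F (t + 1)) - 1) / (Nat.card (F t) - 1))
  have hind : ∀ s, s ≤ E → (∀ U ∈ D s, finrank Fq U = k) ∧ MeetsInLines (D s) ∧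
      (D s).Nonempty ∧ (D s).ncard = ∏ t ∈ Finset.range s, φ t := by
    intro s
    induction s with
    | zero =>
      intro _
      refine ⟨?_, ?_, ⟨⊤, rfl⟩, ?_⟩
      · rintro U rfl
        rw [finrank_top, hdim 0 (Nat.zero_le _)]
        simp
      · rintro U rfl V rfl
        intros
        rfl
      · exact Set.ncard_singleton _
    | succ s ih =>
      intro hs
      obtain ⟨h1, h2, h3, h4⟩ := ih (by omega)
      have := hfin s (by omega)
      have := hfin (s + 1) hs
      refine ⟨nextCode_finrank (hdeg s hs) h1,
        nextCode_meetsInLines (hdeg s hs) (hω0 s hs) (hω s hs) h2, ?_, ?_⟩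
      · obtain ⟨U, hU⟩ := h3
        have hq1 : 1 < Fintype.card Fq := Fintype.one_lt_card
        exact ⟨_, (mem_nextCode_iff (ω s) (γ s) (D s) _).2
          ⟨U, hU, 1, ⟨0, fun _ => 0, 0, ⟨0, by omega⟩⟩, rfl⟩⟩
      · rw [Finset.prod_range_succ, ← h4]
        exact nextCode_ncard (hdeg s hs) (hω0 s hs) (hω s hs) hk h1 h2
  obtain ⟨h1, h2, h3, h4⟩ := hind E le_rfl
  have hE0 : E ≠ 0 := by
    have := he 0 (by omega)
    have hle : e 0 ≤ c z := by
      rw [hc]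
      exact Finset.single_le_sum (f := e) (fun _ _ => Nat.zero_le _) (Finset.mem_range.2 hz)
    omega
  have hcyc : ∀ X ∈ D E, ∀ u : (F E)ˣ, mulSub (u : F E) X ∈ D E := by
    obtain ⟨N, rfl⟩ := Nat.exists_eq_succ_of_ne_zero hE0
    exact nextCode_mulSub
  have hfull : ∀ X ∈ D E, FullLengthOrbit X := by
    clear hCD h4 hcyc h1 h2 h3 hC hE
    obtain ⟨N, rfl⟩ := Nat.exists_eq_succ_of_ne_zero hE0
    have := hfin N (by omega)
    exact nextCode_fullLength (hdeg N (by omega)) (hω0 N (by omega)) (hω N (by omega)) hk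
      (hind N (by omega)).1
  have := hfd E le_rfl
  rw [hCD]
  refine ⟨h1, hcyc, minDist_eq hk h3 h1 hcyc h2 hfull, ?_⟩
  -- Products over the steps of the tower regroup into the blocks of equal step degree.
  have hregroup : ∀ (g : ℕ → ℕ) (j : ℕ), ∏ t ∈ Finset.range (c j), g t
      = ∏ j' ∈ Finset.range j, ∏ i ∈ Finset.range (e j'), g (c j' + i) := by
    intro g j
    induction j with
    | zero => simp [hc]
    | succ j ih => rw [hcsucc, Finset.prod_range_add, ih, Finset.prod_range_succ]
  have hprodstep : ∀ j, j < z → ∀ i, i ≤ e j → ∏ t ∈ Finset.range (c j + i), step t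
      = p j ^ i * ∏ h ∈ Finset.range j, p h ^ e h := by
    intro j hj i hi
    rw [Finset.prod_range_add, hregroup, mul_comm]
    congr 1
    · rw [Finset.prod_congr rfl fun x hx => hstep j hj x ((Finset.mem_range.1 hx).trans_le hi)]
      simp
    · refine Finset.prod_congr rfl fun h hh => ?_
      have hh' := Finset.mem_range.1 hh
      rw [Finset.prod_congr rfl fun x hx => hstep h (by omega) x (Finset.mem_range.1 hx)]
      simp
  have hcz : ∀ j, j < z → c j + e j ≤ E := by
    intro j hj
    rw [← hcsucc, hE, hc, hc]
    exact Finset.sum_le_sum_of_subset (Finset.range_subset_range.2 hj)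
  rw [h4, hE, hregroup]
  refine Finset.prod_congr rfl fun j hj => Finset.prod_congr rfl fun i hi => ?_
  rw [Finset.mem_range] at hj hi
  have hle := hcz j hj
  have e1 : Nat.card (F (c j + i))
      = Fintype.card Fq ^ (p j ^ i * (∏ h ∈ Finset.range j, p h ^ e h) * k) := by
    rw [hcard _ (by omega), hdim _ (by omega), hprodstep j hj i hi.le]
  have e2 : Nat.card (F (c j + i + 1))
      = Fintype.card Fq ^ (p j ^ (i + 1) * (∏ h ∈ Finset.range j, p h ^ e h) * k) := by
    rw [hcard _ (by omega), hdim _ (by omega), add_assoc, hprodstep j hj (i + 1) hi]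
  have e3 : ℓ (c j + i) = (p j - 3) / 2 := by
    simp only [hℓdef]
    rw [hstep j hj i hi]
  simp only [φ]
  rw [e1, e2, e3, ← pow_mul]
  congr 4
  ring_nf
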